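/- Let 0 < m ≤ 1. There exists a constant c = c(m) > 0 such that for all u, ψ ∈ ℝ and all μ > 0 with ψ ≤ u and u^m ≤ ψ^m + μ^m, one has 𝔟[u^m, ψ^m + μ^m] ≤ c (|u|^(1−m) + μ^(1−m)) μ^(2m), where for w ∈ ℝ we set 𝔟[u^m, w] := (m/(1+m))(|w|^((1+m)/m) − |u|^(1+m)) − u (w − u^m). -/

import Mathlib

/-!
Put `a = u^m`, `w = ψ^m + μ^m`, `δ = μ^m` and `p = 1/m ≥ 1`. Then `u = a^p`, and `𝔟[a, w]` is the
Bregman divergence `F w - F a - F' a (w - a)` of `F x = |x|^(p+1)/(p+1)`, where `F' x = x^p`. As a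
function of `w` it vanishes at `a` and has derivative `w^p - a^p`, so applying the mean value
inequality twice on the interval `|x - a| ≤ δ` bounds it by `p (|a| + δ)^(p-1) δ²`. Finally
`(|a| + δ)^(p-1) ≤ 2^(p-1) (|a|^(p-1) + δ^(p-1))`, and `|a|^(p-1) = |u|^(1-m)`,
`δ^(p-1) = μ^(1-m)`.
-/

/-- Signed power: `a^k := |a|^(k-1) a`. -/
noncomputable def spow (a k : ℝ) : ℝ := |a| ^ (k - 1) * a

/-- The boundary term `𝔟[u^m, w]` for `w ∈ ℝ`:
`𝔟[u^m, w] := (m/(1+m))(|w|^((1+m)/m) − |u|^(1+m)) − u (w − u^m)`. -/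
noncomputable def btermW (m u w : ℝ) : ℝ :=
  m / (1 + m) * (|w| ^ ((1 + m) / m) - |u| ^ (1 + m)) - u * (w - spow u m)

section SignedPower

variable {a k p x δ : ℝ}

theorem spow_of_nonneg (hk : k ≠ 0) (ha : 0 ≤ a) : spow a k = a ^ k := by
  rcases ha.eq_or_lt with rfl | ha
  · simp [spow, Real.zero_rpow hk]
  · rw [spow, abs_of_pos ha, Real.rpow_sub_one ha.ne', div_mul_cancel₀ _ ha.ne']

theorem spow_neg (a k : ℝ) : spow (-a) k = -spow a k := by
  simp [spow]

theorem abs_spow (hk : k ≠ 0) (a : ℝ) : |spow a k| = |a| ^ k := by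
  rw [← spow_of_nonneg hk (abs_nonneg a), spow, spow, abs_mul, abs_abs,
    abs_of_nonneg (Real.rpow_nonneg (abs_nonneg a) _)]

theorem spow_inv_spow (hk : k ≠ 0) (a : ℝ) : spow (spow a k) k⁻¹ = a := by
  rcases eq_or_ne a 0 with rfl | ha
  · simp [spow]
  · rw [spow, abs_spow hk, spow, ← mul_assoc, ← Real.rpow_mul (abs_nonneg a),
      ← Real.rpow_add (abs_pos.2 ha), mul_sub, mul_inv_cancel₀ hk,
      mul_one, sub_add_sub_cancel', sub_self, Real.rpow_zero, one_mul]

theorem spow_monotone (hk : 0 < k) : Monotone (spow · k) := by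
  refine monotone_of_odd_of_monotoneOn_nonneg (spow_neg · k) fun x hx y hy hxy ↦ ?_
  simp only [spow_of_nonneg hk.ne' hx, spow_of_nonneg hk.ne' hy]
  exact Real.rpow_le_rpow hx hxy hk.le

theorem hasDerivAt_spow (h : x ≠ 0 ∨ 1 ≤ p) :
    HasDerivAt (spow · p) (p * |x| ^ (p - 1)) x := by
  rcases eq_or_ne x 0 with rfl | hx
  · have hp : 1 ≤ p := h.neg_resolve_left rfl
    have h_deriv : p * |(0 : ℝ)| ^ (p - 1) = |0| ^ (p - 1) := by
      rcases hp.eq_or_lt with rfl | hp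
      · exact one_mul _
      · rw [abs_zero, Real.zero_rpow (sub_pos.2 hp).ne', mul_zero]
    have h_cont : ContinuousAt (fun y : ℝ ↦ |y| ^ (p - 1)) 0 :=
      continuous_abs.continuousAt.rpow_const (.inr (sub_nonneg.2 hp))
    rw [h_deriv, hasDerivAt_iff_tendsto_slope_zero]
    refine (h_cont.tendsto.mono_left nhdsWithin_le_nhds).congr' ?_
    filter_upwards [self_mem_nhdsWithin] with t ht
    rw [zero_add, spow, spow, mul_zero, sub_zero, smul_eq_mul, mul_comm, mul_inv_cancel_right₀ ht]
  · have h_abs := (hasDerivAt_abs hx).rpow_const (p := p - 1) (.inl (abs_ne_zero.2 hx))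
    refine (h_abs.mul (hasDerivAt_id x)).congr_deriv ?_
    have h_pow : |x| ^ (p - 1 - 1) * |x| = |x| ^ (p - 1) := by
      rw [Real.rpow_sub_one (abs_ne_zero.2 hx), div_mul_cancel₀ _ (abs_ne_zero.2 hx)]
    have h_sign : (SignType.sign x : ℝ) * x = |x| := sign_mul_self x
    simp only [id]
    linear_combination (p - 1) * |x| ^ (p - 1 - 1) * h_sign + (p - 1) * h_pow

theorem abs_spow_sub_spow_le (hp : 1 ≤ p) (hx : |x - a| ≤ δ) :
    |spow x p - spow a p| ≤ p * (|a| + δ) ^ (p - 1) * |x - a| := by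
  refine (convex_closedBall a δ).norm_image_sub_le_of_norm_hasDerivWithin_le
    (f := (spow · p)) (fun y _ ↦ (hasDerivAt_spow (.inr hp)).hasDerivWithinAt) (fun y hy ↦ ?_)
    (Metric.mem_closedBall_self ((abs_nonneg _).trans hx)) (mem_closedBall_iff_norm.2 hx)
  rw [Real.norm_of_nonneg (by positivity)]
  have hy_abs : |y| ≤ |a| + δ := norm_le_of_mem_closedBall hy
  gcongr

end SignedPower

/-- The Bregman divergence `F w - F a - F' a (w - a)` of `F x = |x|^(p+1)/(p+1)`, whose derivative
is the signed power `x^p`. For `p = 1/m` and `a = u^m` this is the boundary term `𝔟[u^m, w]`. -/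
noncomputable def powBregman (p w a : ℝ) : ℝ :=
  (|w| ^ (p + 1) - |a| ^ (p + 1)) / (p + 1) - spow a p * (w - a)

section Bregman

variable {p a w δ : ℝ}

theorem powBregman_self (p a : ℝ) : powBregman p a a = 0 := by
  simp [powBregman]

theorem hasDerivAt_powBregman (hp : 0 < p) (a w : ℝ) :
    HasDerivAt (powBregman p · a) (spow w p - spow a p) w := by
  have h_pow := ((hasDerivAt_abs_rpow w (p := p + 1) (by linarith)).sub_const
    (|a| ^ (p + 1))).div_const (p + 1)
  have h_lin := ((hasDerivAt_id w).sub_const a).const_mul (spow a p)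
  refine (h_pow.sub h_lin).congr_deriv ?_
  rw [spow, spow, show p + 1 - 2 = p - 1 by ring]
  field_simp

theorem abs_powBregman_le (hp : 1 ≤ p) (hw : |w - a| ≤ δ) :
    |powBregman p w a| ≤ p * (|a| + δ) ^ (p - 1) * δ ^ 2 := by
  have hδ : 0 ≤ δ := (abs_nonneg _).trans hw
  have h_deriv : ∀ x ∈ Metric.closedBall a δ,
      ‖spow x p - spow a p‖ ≤ p * (|a| + δ) ^ (p - 1) * δ := fun x hx ↦ by
    rw [mem_closedBall_iff_norm, Real.norm_eq_abs] at hx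
    refine (abs_spow_sub_spow_le hp hx).trans ?_
    gcongr
  have h_mvt := (convex_closedBall a δ).norm_image_sub_le_of_norm_hasDerivWithin_le
    (fun x _ ↦ (hasDerivAt_powBregman (by linarith) a x).hasDerivWithinAt) h_deriv
    (Metric.mem_closedBall_self hδ) (mem_closedBall_iff_norm.2 hw)
  rw [powBregman_self, sub_zero, Real.norm_eq_abs, Real.norm_eq_abs] at h_mvt
  calc |powBregman p w a| ≤ p * (|a| + δ) ^ (p - 1) * δ * |w - a| := h_mvt
    _ ≤ p * (|a| + δ) ^ (p - 1) * δ * δ := by gcongr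
    _ = p * (|a| + δ) ^ (p - 1) * δ ^ 2 := by ring

end Bregman

theorem add_rpow_le_two_rpow_mul_rpow_add_rpow {r x y : ℝ} (hr : 0 ≤ r) (hx : 0 ≤ x)
    (hy : 0 ≤ y) : (x + y) ^ r ≤ 2 ^ r * (x ^ r + y ^ r) := by
  calc (x + y) ^ r ≤ (2 * max x y) ^ r := by
        gcongr
        linarith [le_max_left x y, le_max_right x y]
    _ = 2 ^ r * max (x ^ r) (y ^ r) := by
        rw [Real.mul_rpow zero_le_two (le_max_of_le_left hx), Real.rpow_max hx hy hr]
    _ ≤ 2 ^ r * (x ^ r + y ^ r) := by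
        gcongr
        exact max_le_add_of_nonneg (Real.rpow_nonneg hx r) (Real.rpow_nonneg hy r)

theorem rpow_rpow_inv_sub_one {m x : ℝ} (hm : m ≠ 0) (hx : 0 ≤ x) :
    (x ^ m) ^ (m⁻¹ - 1) = x ^ (1 - m) := by
  rw [← Real.rpow_mul hx, mul_sub, mul_inv_cancel₀ hm, mul_one]

section BoundaryTerm

variable {m u w μ : ℝ}

theorem btermW_eq_powBregman (hm : 0 < m) (u w : ℝ) :
    btermW m u w = powBregman m⁻¹ w (spow u m) := by
  have h_exp : (1 + m) / m = m⁻¹ + 1 := by field_simp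
  have h_pow : |spow u m| ^ (m⁻¹ + 1) = |u| ^ (1 + m) := by
    rw [abs_spow hm.ne', ← Real.rpow_mul (abs_nonneg u)]
    congr 1
    field_simp
  rw [btermW, powBregman, spow_inv_spow hm.ne', h_pow, h_exp]
  field_simp

theorem abs_btermW_le (hm0 : 0 < m) (hm1 : m ≤ 1) (hμ : 0 ≤ μ) (hw : |w - spow u m| ≤ μ ^ m) :
    |btermW m u w| ≤
      m⁻¹ * 2 ^ (m⁻¹ - 1) * (|u| ^ (1 - m) + μ ^ (1 - m)) * μ ^ (2 * m) := by
  have hp : 1 ≤ m⁻¹ := (one_le_inv₀ hm0).2 hm1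
  have h_sq : (μ ^ m) ^ 2 = μ ^ (2 * m) := by
    rw [← Real.rpow_mul_natCast hμ, mul_comm, Nat.cast_ofNat]
  have h_split : (|u| ^ m + μ ^ m) ^ (m⁻¹ - 1) ≤
      2 ^ (m⁻¹ - 1) * (|u| ^ (1 - m) + μ ^ (1 - m)) := by
    rw [← rpow_rpow_inv_sub_one hm0.ne' (abs_nonneg u), ← rpow_rpow_inv_sub_one hm0.ne' hμ]
    exact add_rpow_le_two_rpow_mul_rpow_add_rpow (sub_nonneg.2 hp) (by positivity) (by positivity)
  calc |btermW m u w| ≤ m⁻¹ * (|u| ^ m + μ ^ m) ^ (m⁻¹ - 1) * (μ ^ m) ^ 2 := by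
        rw [btermW_eq_powBregman hm0, ← abs_spow hm0.ne' u]
        exact abs_powBregman_le hp hw
    _ ≤ m⁻¹ * (2 ^ (m⁻¹ - 1) * (|u| ^ (1 - m) + μ ^ (1 - m))) * μ ^ (2 * m) := by
        rw [h_sq]
        gcongr
    _ = m⁻¹ * 2 ^ (m⁻¹ - 1) * (|u| ^ (1 - m) + μ ^ (1 - m)) * μ ^ (2 * m) := by ring

end BoundaryTerm

/-- For `0 < m ≤ 1` there is `c = c(m) > 0` such that for all `u, ψ ∈ ℝ`, `μ > 0` with
`ψ ≤ u` and `u^m ≤ ψ^m + μ^m`: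
`𝔟[u^m, ψ^m + μ^m] ≤ c (|u|^(1−m) + μ^(1−m)) μ^(2m)`. -/
theorem boundary_term_near_obstacle (m : ℝ) (hm0 : 0 < m) (hm1 : m ≤ 1) :
    ∃ c : ℝ, 0 < c ∧ ∀ u ψ μ : ℝ, 0 < μ → ψ ≤ u →
      spow u m ≤ spow ψ m + μ ^ m →
      btermW m u (spow ψ m + μ ^ m) ≤
        c * (|u| ^ (1 - m) + μ ^ (1 - m)) * μ ^ (2 * m) := by
  refine ⟨m⁻¹ * 2 ^ (m⁻¹ - 1), by positivity, fun u ψ μ hμ hψu huψ ↦ ?_⟩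
  have hψu_spow : spow ψ m ≤ spow u m := spow_monotone hm0 hψu
  have hdist : |spow ψ m + μ ^ m - spow u m| ≤ μ ^ m := by
    rw [abs_of_nonneg (sub_nonneg.2 huψ)]
    linarith
  exact (le_abs_self _).trans (abs_btermW_le hm0 hm1 hμ.le hdist)
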